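/- Lie algebra version of the MVW theorem: for every x in the Lie algebra u(E) = {x ∈ End_k(E) : x is A-linear and ⟨xu, v⟩ + ⟨u, xv⟩ = 0}, there exists (g, -1) ∈ Ŭ(E) such that g x g⁻¹ = -x. -/

import Mathlib

/-!
The trace form of `A` over `k` turns `B` into a `k`-valued form `b` that is symmetric up to the
sign `ε`; it is nondegenerate because a nonzero ideal of `A` contains a nonzero idempotent, whose
trace is its rank. Let `R = A[X]` act on `E` with `X` acting as `x`, and let `σ` be the involution
of `R` extending `τ` with `σ X = -X`. Then `b (r u) v = b u (σ r v)`, and the theorem asks for a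
`σ`-semilinear bijection `g` with `b (g u) (g v) = b v u`: semilinearity over `A` recovers the
`A`-valued identity, and semilinearity at `X` is `g x = -x g`.

Such a `g` is obtained by splitting off orthogonal summands of two kinds.
* If `R e` is nondegenerate, `r e ↦ σ(r) e` works.
* If `R e`, `R f` are isotropic and in perfect duality, `r e + s f ↦ σ(r) f + σ(s) e` works.

In both cases well-definedness is automatic from the isometry identity
(`exists_isometry_of_cover`).

A summand of one of these kinds always exists (`exists_perf`), because `R`, a finite product of
rings `K[X]`, has principal maximal ideals. Let `(p)` be a maximal ideal occurring in `E`, and let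
`d + 1` be the exponent of the `p`-primary part. Every nonzero submodule of a cyclic `p`-primary
module `R e` contains `p ^ d e` (`exists_smul_smul_eq_pow_smul`), so `R e` and `R f`, with `f` being
`σ p`-primary, are in perfect duality as soon as `b (p ^ d e) f ≠ 0`. If `σ p` and `p` are coprime,
primary parts are isotropic and the second kind occurs. Otherwise, either some `b (r p ^ d e) e` is
nonzero, which gives the first kind, or `b (r p ^ d u) u` always vanishes; then `e`, and next
`f`, can be corrected to isotropic vectors by a Hensel-type iteration which divides by `2`
(`exists_isotropic_left`).
-/

/-- `B` is an `ε`-Hermitian form on the `A`-module `E`, with respect to the involution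
`τ` of `A`: it is biadditive, `A`-linear in the first variable, `(ε, τ)`-Hermitian
symmetric, and non-degenerate. -/
def IsHermForm (A : Type) [CommRing A] (τ : A → A) (ε : A)
    (E : Type) [AddCommGroup E] [Module A E] (B : E → E → A) : Prop :=
  (∀ u u' v, B (u + u') v = B u v + B u' v) ∧
  (∀ u v v', B u (v + v') = B u v + B u v') ∧
  (∀ (a : A) (u v : E), B (a • u) v = a * B u v) ∧
  (∀ u v, B u v = ε * τ (B v u)) ∧
  (∀ u, (∀ v, B u v = 0) → u = 0)

/-- The `ε`-Hermitian `A`-module `(E, B)` is simple: it is nonzero and every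
non-degenerate `A`-submodule is `⊥` or `⊤`. -/
def IsSimpleHerm (A : Type) [CommRing A] (τ : A → A) (ε : A)
    (E : Type) [AddCommGroup E] [Module A E] (B : E → E → A) : Prop :=
  Nontrivial E ∧
    ∀ N : Submodule A E, (∀ u ∈ N, (∀ v ∈ N, B u v = 0) → u = 0) → N = ⊥ ∨ N = ⊤

set_option linter.unusedSectionVars false

/-- `b` is a nondegenerate `k`-bilinear form on the `R`-module `V`, symmetric up to the sign `η`,
for which the adjoint of the action of `r : R` is the action of `σ r`, with `σ` an involution. -/
structure IsAdjointForm {k R V : Type*} [Field k] [CommRing R] [AddCommGroup V] [Module k V]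
    [Module R V] (σ : R →+* R) (η : k) (b : V →ₗ[k] V →ₗ[k] k) : Prop where
  sq : η * η = 1
  invol : ∀ r, σ (σ r) = r
  symm : ∀ u v, b v u = η * b u v
  adj : ∀ (r : R) u v, b (r • u) v = b u (σ r • v)
  nondeg : ∀ u, (∀ v, b u v = 0) → u = 0

/-! ### Cyclic primary modules and duality -/

/-- If `b` pairs `S` and `T` without left or right kernel, every linear functional on `S` is
represented by a vector of `T`. -/
theorem exists_mem_represents {k V : Type*} [Field k] [AddCommGroup V] [Module k V]
    [FiniteDimensional k V] (b : V →ₗ[k] V →ₗ[k] k) (S T : Submodule k V)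
    (h₁ : ∀ x ∈ S, (∀ y ∈ T, b x y = 0) → x = 0)
    (h₂ : ∀ y ∈ T, (∀ x ∈ S, b x y = 0) → y = 0) (ψ : V →ₗ[k] k) :
    ∃ y ∈ T, ∀ x ∈ S, b x y = ψ x := by
  have hp : (b.domRestrict₁₂ S T).IsPerfPair := by
    apply LinearMap.IsPerfPair.of_injective
    · rw [injective_iff_map_eq_zero]
      intro x hx
      exact Subtype.ext (h₁ x x.2 fun y hy => LinearMap.congr_fun hx ⟨y, hy⟩)
    · rw [injective_iff_map_eq_zero]
      intro y hy
      exact Subtype.ext (h₂ y y.2 fun x hx => LinearMap.congr_fun hy ⟨x, hx⟩)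
  obtain ⟨y, hy⟩ := hp.bijective_right.2 (ψ.domRestrict S)
  exact ⟨y, y.2, fun x hx => LinearMap.congr_fun hy ⟨x, hx⟩⟩

/-- Uniseriality of a cyclic `p`-primary module: every nonzero submodule of `R e` contains
`p ^ d • e`. The hypothesis on `p` says that `(p)` is a maximal ideal (or the unit ideal). -/
theorem exists_smul_smul_eq_pow_smul {R V : Type*} [CommRing R] [AddCommGroup V] [Module R V]
    {p : R} (hp : ∀ r, p ∣ r ∨ IsCoprime r p) (d : ℕ) :
    ∀ (e : V) (r : R), p ^ (d + 1) • e = 0 → r • e ≠ 0 → ∃ t : R, t • r • e = p ^ d • e := by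
  induction d with
  | zero =>
    intro e r he hr
    rcases hp r with ⟨s, rfl⟩ | ⟨a, c, hac⟩
    · exact absurd (by rw [mul_comm, mul_smul]; simp_all) hr
    · refine ⟨a, ?_⟩
      have := congrArg (· • e) hac
      simp only [add_smul, mul_smul, one_smul] at this
      simp_all
  | succ d ih =>
    intro e r he hr
    rcases hp r with ⟨s, rfl⟩ | hco
    · obtain ⟨t, ht⟩ := ih (p • e) s (by rwa [← mul_smul, ← pow_succ])
        (by rwa [← mul_smul, mul_comm])
      refine ⟨t, ?_⟩
      rw [mul_comm p s, mul_smul, ht, ← mul_smul, pow_succ]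
    · obtain ⟨a, c, hac⟩ := hco.pow_right (n := d + 1 + 1)
      refine ⟨p ^ (d + 1) * a, ?_⟩
      have := congrArg (· • e) hac
      simp only [add_smul, mul_smul, one_smul, he, smul_zero, add_zero] at this
      rw [mul_smul, this]

section
variable {k R V : Type*} [Field k] [CommRing R] [Algebra k R] [AddCommGroup V] [Module k V]
    [Module R V] [IsScalarTower k R V] {σ : R →+* R} {η : k}
    {b : V →ₗ[k] V →ₗ[k] k}

theorem lsmul_pow_apply {R V : Type*} [CommRing R] [AddCommGroup V] [Module R V] (r : R) (n : ℕ)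
    (v : V) : (LinearMap.lsmul R V r ^ n) v = r ^ n • v := by
  induction n with
  | zero => simp
  | succ n ih => rw [pow_succ', Module.End.mul_apply, ih, LinearMap.lsmul_apply, ← mul_smul,
      ← pow_succ']

/-- The `p`-primary part of `V`, if nonzero, has a well-defined exponent `d + 1`. -/
theorem exists_max_exponent [FiniteDimensional k V] (p : R) (hv : ∃ v : V, v ≠ 0 ∧ p • v = 0) :
    ∃ d : ℕ, (∃ e : V, p ^ d • e ≠ 0 ∧ p ^ (d + 1) • e = 0) ∧
      ∀ (v : V) (n : ℕ), p ^ n • v = 0 → p ^ (d + 1) • v = 0 := by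
  classical
  have hN : IsNoetherian R V := isNoetherian_of_tower k inferInstance
  have hex : ∃ D : ℕ, ∀ (v : V) (n : ℕ), p ^ n • v = 0 → p ^ D • v = 0 := by
    obtain ⟨D, hD⟩ := (LinearMap.eventually_iSup_ker_pow_eq (LinearMap.lsmul R V p)).exists
    refine ⟨D, fun v n hn => ?_⟩
    have h1 : v ∈ ⨆ m, LinearMap.ker (LinearMap.lsmul R V p ^ m) :=
      Submodule.mem_iSup_of_mem n (by simpa [lsmul_pow_apply] using hn)
    rw [hD] at h1
    simpa [lsmul_pow_apply] using h1
  obtain ⟨v, hv0, hv⟩ := hv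
  have h0 : Nat.find hex ≠ 0 := by
    intro h
    have := Nat.find_spec hex v 1 (by simpa using hv)
    rw [h] at this
    exact hv0 (by simpa using this)
  obtain ⟨d, hd⟩ := Nat.exists_eq_succ_of_ne_zero h0
  have hspec := Nat.find_spec hex
  have hmin := Nat.find_min hex (m := d) (by omega)
  rw [hd] at hspec
  push Not at hmin
  obtain ⟨e, n, hn, he⟩ := hmin
  exact ⟨d, ⟨e, he, hspec e n hn⟩, hspec⟩

namespace IsAdjointForm

theorem adj' (H : IsAdjointForm σ η b) (r : R) (u v : V) : b u (r • v) = b (σ r • u) v := by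
  rw [H.adj, H.invol]

theorem eq_zero_symm (H : IsAdjointForm σ η b) {u v : V} (h : b u v = 0) : b v u = 0 := by
  rw [H.symm, h, mul_zero]

theorem nondeg' (H : IsAdjointForm σ η b) (v : V) (h : ∀ u, b u v = 0) : v = 0 :=
  H.nondeg v fun u => H.eq_zero_symm (h u)

/-- A `p`-primary vector pairs nontrivially with `V` only through the `σ p`-primary part of `V`:
in the Fitting decomposition of `V` for `σ p`, the range part is orthogonal to `u`. -/
theorem exists_torsion_of_ne_zero [FiniteDimensional k V] (H : IsAdjointForm σ η b) {p : R}
    {u v : V} {a : ℕ} (hu : p ^ a • u = 0) (hb : b u v ≠ 0) :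
    ∃ v' : V, (∃ n : ℕ, σ p ^ n • v' = 0) ∧ b u v' ≠ 0 := by
  have hN : IsNoetherian R V := isNoetherian_of_tower k inferInstance
  have hA : IsArtinian R V := isArtinian_of_tower k inferInstance
  obtain ⟨n, hn, hna⟩ := ((LinearMap.eventually_isCompl_ker_pow_range_pow
    (LinearMap.lsmul R V (σ p))).and (Filter.eventually_ge_atTop a)).exists
  have hv : v ∈ (⊤ : Submodule R V) := trivial
  rw [← hn.sup_eq_top, Submodule.mem_sup] at hv
  obtain ⟨y, hy, z, ⟨w, rfl⟩, rfl⟩ := hv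
  refine ⟨y, ⟨n, by simpa [lsmul_pow_apply] using hy⟩, ?_⟩
  have hz : b u ((LinearMap.lsmul R V (σ p) ^ n) w) = 0 := by
    have : p ^ n • u = 0 := by
      rw [← Nat.sub_add_cancel hna, pow_add, mul_smul, hu, smul_zero]
    rw [lsmul_pow_apply, ← map_pow, ← H.adj, this, map_zero,
      LinearMap.zero_apply]
  rwa [map_add, hz, add_zero] at hb

/-- By duality, the exponent of the `σ p`-primary part is bounded by that of the `p`-primary
part. -/
theorem pow_smul_eq_zero_of_max [FiniteDimensional k V] (H : IsAdjointForm σ η b) {p : R} {d : ℕ}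
    (hd : ∀ (v : V) (n : ℕ), p ^ n • v = 0 → p ^ (d + 1) • v = 0) {f : V} {n : ℕ}
    (hf : σ p ^ n • f = 0) : σ p ^ (d + 1) • f = 0 := by
  by_contra hne
  obtain ⟨v, hv⟩ : ∃ v, b (σ p ^ (d + 1) • f) v ≠ 0 := by
    by_contra! h
    exact hne (H.nondeg _ h)
  obtain ⟨v', ⟨m, hm⟩, hv'⟩ := H.exists_torsion_of_ne_zero (p := σ p) (a := n)
    (by rw [smul_comm, hf, smul_zero]) hv
  rw [H.invol] at hm
  apply hv'
  rw [H.adj, map_pow, H.invol, hd v' m hm, map_zero]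

/-- The cyclic submodules generated by `e` and `f` are in perfect duality under `b`. -/
def Perf (b : V →ₗ[k] V →ₗ[k] k) (R : Type*) [CommRing R] [Module R V] (e f : V) : Prop :=
  (∀ r : R, (∀ s : R, b (r • e) (s • f) = 0) → r • e = 0) ∧
    ∀ s : R, (∀ r : R, b (r • e) (s • f) = 0) → s • f = 0

theorem Perf.swap (H : IsAdjointForm σ η b) {e f : V} (h : Perf b R e f) : Perf b R f e :=
  ⟨fun r hr => h.2 r fun s => H.eq_zero_symm (hr s),
    fun s hs => h.1 s fun r => H.eq_zero_symm (hs r)⟩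

/-- Cyclic primary modules are in perfect duality as soon as the socle of the first one, generated
by `p ^ d • e`, pairs nontrivially with `f`. -/
theorem perf_of_ne_zero (H : IsAdjointForm σ η b) {p : R}
    (hp : ∀ r, p ∣ r ∨ IsCoprime r p) {d : ℕ} {e f : V} (he : p ^ (d + 1) • e = 0)
    (hf : σ p ^ (d + 1) • f = 0) {r₀ : R} (hb : b (r₀ • p ^ d • e) f ≠ 0) : Perf b R e f := by
  have hq : ∀ r, σ p ∣ r ∨ IsCoprime r (σ p) := fun r =>
    (hp (σ r)).imp (fun h => by simpa [H.invol] using map_dvd σ h)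
      fun h => by simpa [H.invol] using h.map σ
  constructor
  · intro r hr
    by_contra hne
    obtain ⟨t, ht⟩ := exists_smul_smul_eq_pow_smul hp d e r he hne
    apply hb
    rw [← ht, ← mul_smul, H.adj, hr]
  · intro s hs
    by_contra hne
    obtain ⟨t, ht⟩ := exists_smul_smul_eq_pow_smul hq d f s hf hne
    apply hb
    rw [smul_comm r₀, H.adj, map_pow, ← ht, H.adj', smul_smul, hs]

theorem Perf.exists_smul [FiniteDimensional k V] {e f : V} (h : Perf b R e f)
    (ψ : V →ₗ[k] k) : ∃ s : R, ∀ r : R, b (r • e) (s • f) = ψ (r • e) := by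
  obtain ⟨y, hy, hy'⟩ := exists_mem_represents b ((Submodule.span R {e}).restrictScalars k)
    ((Submodule.span R {f}).restrictScalars k)
    (by
      intro x hx hxy
      obtain ⟨r, rfl⟩ := Submodule.mem_span_singleton.1 hx
      exact h.1 r fun s => hxy _ (Submodule.mem_span_singleton.2 ⟨s, rfl⟩))
    (by
      intro x hx hxy
      obtain ⟨r, rfl⟩ := Submodule.mem_span_singleton.1 hx
      exact h.2 r fun s => hxy _ (Submodule.mem_span_singleton.2 ⟨s, rfl⟩)) ψ
  obtain ⟨s, rfl⟩ := Submodule.mem_span_singleton.1 hy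
  exact ⟨s, fun r => hy' _ (Submodule.mem_span_singleton.2 ⟨r, rfl⟩)⟩

/-! ### Isotropic vectors -/

/-- Completing the square: the correction `y` cancels the `e`-terms of the restriction of `b` to
`R (e + y)`. -/
theorem form_add_of_half (h2 : (2 : k) ≠ 0) (H : IsAdjointForm σ η b) {e y : V}
    (h : ∀ r : R, b (r • e) y = -(2 : k)⁻¹ * b (r • e) e) (r : R) :
    b (r • (e + y)) (e + y) = b (r • y) y := by
  have h1 : b (r • y) e = -(2 : k)⁻¹ * b (r • e) e := by
    rw [H.symm, H.adj', h, ← H.adj', H.symm (r • e) e]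
    linear_combination (-(2 : k)⁻¹ * b (r • e) e) * H.sq
  simp only [smul_add, map_add, LinearMap.add_apply, h, h1]
  field_simp
  ring

/-- When `(σ p) = (p)` and `b (r p ^ d u) u` always vanishes on the `p`-primary part, `e` can be
modified, keeping its duality with `f`, so that `R e` becomes isotropic. -/
theorem exists_isotropic_left [FiniteDimensional k V] (h2 : (2 : k) ≠ 0)
    (H : IsAdjointForm σ η b) {p : R} (hp : ∀ r, p ∣ r ∨ IsCoprime r p) {c : R}
    (hc : σ p = c * p) {d : ℕ}
    (halt : ∀ u : V, p ^ (d + 1) • u = 0 → ∀ r : R, b (r • p ^ d • u) u = 0) {e f : V}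
    (he : p ^ (d + 1) • e = 0) (hf : p ^ (d + 1) • f = 0) (hb : b (p ^ d • e) f ≠ 0) :
    ∃ e' : V, p ^ (d + 1) • e' = 0 ∧ b (p ^ d • e') f ≠ 0 ∧ ∀ r : R, b (r • e') e' = 0 := by
  have hc' : p = σ c * σ p := by rw [← map_mul, ← hc, H.invol]
  -- The vanishing of `b (r p ^ m e) e` for all `r` is known for `m = d`; `m` is lowered step by step.
  have key : ∀ n ≤ d, ∃ e' : V, p ^ (d + 1) • e' = 0 ∧ b (p ^ d • e') f ≠ 0 ∧
      ∀ r : R, b (r • p ^ (d - n) • e') e' = 0 := by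
    intro n
    induction n with
    | zero => exact fun _ => ⟨e, he, hb, halt e he⟩
    | succ n ih =>
      intro hn
      obtain ⟨e, he, hb, hr⟩ := ih (by omega)
      obtain ⟨j, hj⟩ : ∃ j, d - n = j + 1 := ⟨d - n - 1, by omega⟩
      rw [hj] at hr
      rw [show d - (n + 1) = j by omega]
      have hperf : Perf b R e f := H.perf_of_ne_zero hp he
        (by rw [hc, mul_pow, mul_smul, hf, smul_zero]) (r₀ := 1) (by rwa [one_smul])
      obtain ⟨s, hs⟩ := hperf.exists_smul (-(2 : k)⁻¹ • b.flip e)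
      simp only [LinearMap.smul_apply, LinearMap.flip_apply, smul_eq_mul] at hs
      -- The correction `s f` is small: it is killed by `p ^ (j + 1)` and lies in `p R f`.
      have hq : σ p ^ (j + 1) • s • f = 0 := by
        rw [← mul_smul]
        apply hperf.2
        intro r
        rw [mul_smul, ← map_pow, ← H.adj, ← mul_smul, hs, mul_comm _ r, mul_smul, hr, mul_zero]
      have hpj : p ^ (j + 1) • s • f = 0 := by
        rw [hc', mul_pow, mul_smul, hq, smul_zero]
      have hpd : p ^ d • s • f = 0 := by
        rw [show d = (d - (j + 1)) + (j + 1) by omega, pow_add, mul_smul, hpj, smul_zero]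
      have hfd : p ^ d • f ≠ 0 := by
        intro h
        apply hb
        rw [H.adj, map_pow, hc, mul_pow, mul_smul, h, smul_zero, map_zero]
      obtain ⟨s', rfl⟩ : p ∣ s := by
        rcases hp s with h | h
        · exact h
        · obtain ⟨x, y, hxy⟩ := h.pow_right (n := d + 1)
          refine absurd ?_ hfd
          have := congrArg (· • f) hxy
          simp only [add_smul, mul_smul, one_smul, hf, smul_zero, add_zero] at this
          rw [← this, smul_comm, hpd, smul_zero]
      refine ⟨e + (p * s') • f, ?_, ?_, ?_⟩
      · rw [smul_add, he, smul_comm, hf, smul_zero, zero_add]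
      · rwa [smul_add, hpd, add_zero]
      · intro r
        have hy : p ^ j • (p * s') • f = s' • p ^ (j + 1) • f := by
          simp only [smul_smul]; congr 1; ring
        rw [← mul_smul, H.form_add_of_half h2 hs, mul_smul, hy, smul_comm s', smul_comm r, H.adj,
          map_pow, hq, map_zero]
  simpa using key d le_rfl

/-! ### Existence of the basic summands -/

/-- Some maximal ideal, with generator `p`, is the annihilator of a nonzero vector of `V`. -/
theorem exists_prime [FiniteDimensional k V] [Nontrivial V]
    (hR : ∀ m : Ideal R, m.IsMaximal → m.IsPrincipal) :
    ∃ p : R, (∀ r, p ∣ r ∨ IsCoprime r p) ∧ ∃ v : V, v ≠ 0 ∧ p • v = 0 := by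
  have hA : IsArtinian R V := isArtinian_of_tower k inferInstance
  obtain ⟨S, hS⟩ := IsAtomic.exists_atom (Submodule R V)
  rw [← isSimpleModule_iff_isAtom] at hS
  have := IsSimpleModule.nontrivial R S
  obtain ⟨v, hv⟩ := exists_ne (0 : S)
  let m : Ideal R := LinearMap.ker (LinearMap.toSpanSingleton R S v)
  have hm : m.IsMaximal := IsSimpleModule.ker_toSpanSingleton_isMaximal R hv
  obtain ⟨p, hp⟩ := (hR m hm).principal
  refine ⟨p, fun r => ?_, v, by simpa using hv, ?_⟩
  · by_cases hr : r ∈ m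
    · left
      rw [hp] at hr
      exact Ideal.mem_span_singleton.1 hr
    · right
      obtain ⟨y, i, hi, hy⟩ := hm.exists_inv hr
      rw [hp] at hi
      obtain ⟨c, rfl⟩ := Ideal.mem_span_singleton.1 hi
      exact ⟨y, c, by linear_combination hy⟩
  · have : p ∈ m := by
      rw [hp]; exact Ideal.mem_span_singleton_self p
    exact congrArg Subtype.val (show p • v = 0 from this)

theorem form_eq_zero_of_coprime (H : IsAdjointForm σ η b) {p : R} (hco : IsCoprime (σ p) p)
    {n : ℕ} {u v : V} (hu : p ^ n • u = 0) (hv : p ^ n • v = 0) : b u v = 0 := by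
  obtain ⟨x, y, hxy⟩ := hco.pow (m := n) (n := n)
  have := congrArg (· • v) hxy
  simp only [add_smul, mul_smul, one_smul, hv, smul_zero, add_zero] at this
  rw [← this, smul_comm, ← map_pow, ← H.adj, hu, map_zero, LinearMap.zero_apply]

/-- A nonzero `V` contains a nondegenerate cyclic submodule or two isotropic cyclic submodules in
perfect duality. -/
theorem exists_perf [FiniteDimensional k V] [Nontrivial V] (h2 : (2 : k) ≠ 0)
    (H : IsAdjointForm σ η b) (hR : ∀ m : Ideal R, m.IsMaximal → m.IsPrincipal) :
    (∃ e : V, e ≠ 0 ∧ Perf b R e e) ∨ ∃ e f : V, e ≠ 0 ∧ Perf b R e f ∧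
      (∀ r : R, b (r • e) e = 0) ∧ ∀ r : R, b (r • f) f = 0 := by
  obtain ⟨p, hp, hv⟩ := exists_prime (k := k) (R := R) (V := V) hR
  obtain ⟨d, ⟨e, hed, he⟩, hmax⟩ := exists_max_exponent (k := k) p hv
  obtain ⟨f, hf, hb⟩ : ∃ f, σ p ^ (d + 1) • f = 0 ∧ b (p ^ d • e) f ≠ 0 := by
    obtain ⟨f₀, hf₀⟩ : ∃ f, b (p ^ d • e) f ≠ 0 := by
      by_contra! h
      exact hed (H.nondeg _ h)
    obtain ⟨f, ⟨n, hn⟩, hf⟩ := H.exists_torsion_of_ne_zero (a := d + 1)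
      (by rw [smul_comm, he, smul_zero]) hf₀
    exact ⟨f, H.pow_smul_eq_zero_of_max hmax hn, hf⟩
  have hne : ∀ {e f : V}, b (p ^ d • e) f ≠ 0 → e ≠ 0 := by
    rintro e f h rfl
    simp at h
  have hdvd : (∃ c, σ p = c * p) ∨ IsCoprime (σ p) p :=
    (hp (σ p)).imp_left fun ⟨c, hc⟩ => ⟨c, by rw [hc, mul_comm]⟩
  rcases hdvd with ⟨c, hc⟩ | hco
  · have hc' : p = σ c * σ p := by rw [← map_mul, ← hc, H.invol]
    have htor : ∀ u : V, p ^ (d + 1) • u = 0 → σ p ^ (d + 1) • u = 0 := fun u hu => by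
      rw [hc, mul_pow, mul_smul, hu, smul_zero]
    have hf' : p ^ (d + 1) • f = 0 := by rw [hc', mul_pow, mul_smul, hf, smul_zero]
    by_cases halt : ∀ u : V, p ^ (d + 1) • u = 0 → ∀ r : R, b (r • p ^ d • u) u = 0
    · obtain ⟨e, he, hb, hee⟩ := H.exists_isotropic_left h2 hp hc halt he hf' hb
      have hperf : Perf b R e f := H.perf_of_ne_zero hp he hf (r₀ := 1) (by rwa [one_smul])
      obtain ⟨s, hs⟩ := (hperf.swap H).exists_smul (-(2 : k)⁻¹ • b.flip f)
      simp only [LinearMap.smul_apply, LinearMap.flip_apply, smul_eq_mul] at hs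
      have hiso : ∀ r s : R, b (r • e) (s • e) = 0 := fun r s => by
        rw [H.adj', smul_smul, hee]
      refine Or.inr ⟨e, f + s • e, hne hb, H.perf_of_ne_zero hp he ?_ (r₀ := 1) ?_, hee, ?_⟩
      · rw [smul_add, hf, smul_comm, htor e he, smul_zero, zero_add]
      · rwa [one_smul, map_add, hiso, add_zero]
      · intro r
        rw [H.form_add_of_half h2 hs, smul_smul, hiso]
    · push Not at halt
      obtain ⟨u, hu, r, hr⟩ := halt
      refine Or.inl ⟨u, ?_, H.perf_of_ne_zero hp hu (htor u hu) hr⟩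
      rintro rfl
      simp at hr
  · have hco' : IsCoprime (σ (σ p)) (σ p) := by rw [H.invol]; exact hco.symm
    exact Or.inr ⟨e, f, hne hb, H.perf_of_ne_zero hp he hf (r₀ := 1) (by rwa [one_smul]),
      fun r => H.form_eq_zero_of_coprime hco (by rw [smul_comm, he, smul_zero]) he,
      fun r => H.form_eq_zero_of_coprime hco' (by rw [smul_comm, hf, smul_zero]) hf⟩

/-! ### Gluing along orthogonal decompositions -/

/-- The right orthogonal complement of `N`, as an `R`-submodule (`b` being symmetric up to sign, it
is also the left one). -/
def orth (H : IsAdjointForm σ η b) (N : Submodule R V) : Submodule R V where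
  carrier := {w | ∀ n ∈ N, b n w = 0}
  add_mem' hv hw n hn := by rw [map_add, hv n hn, hw n hn, add_zero]
  zero_mem' n _ := map_zero _
  smul_mem' r w hw n hn := by rw [H.adj']; exact hw _ (N.smul_mem _ hn)

/-- An anti-isometry of `V` may be defined on a module `M` covering `V` through `π`: the map `h`
descends to `V` because the identity `hb` and the surjectivity of `h` put the kernel of `π` inside
that of `h`. -/
theorem exists_isometry_of_cover (H : IsAdjointForm σ η b) {M : Type*} [AddCommGroup M]
    [Module R M] (π : M →ₗ[R] V) (h : M →ₛₗ[σ] V) (hπ : Function.Surjective π)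
    (hh : Function.Surjective h) (hb : ∀ m m', b (h m) (h m') = b (π m') (π m)) :
    ∃ g : V →ₛₗ[σ] V, Function.Surjective g ∧ ∀ u v, b (g u) (g v) = b v u := by
  have hker : ∀ m m', π m = π m' → h m = h m' := by
    intro m m' hm
    rw [← sub_eq_zero, ← map_sub]
    apply H.nondeg
    intro v
    obtain ⟨m'', rfl⟩ := hh v
    rw [hb, map_sub, hm, sub_self, map_zero]
  choose s hs using hπ
  refine ⟨⟨⟨fun v => h (s v), fun u v => ?_⟩, fun r v => ?_⟩, fun v => ?_, fun u v => ?_⟩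
  · rw [← map_add]
    exact hker _ _ (by rw [map_add, hs, hs, hs])
  · change h (s (r • v)) = σ r • h (s v)
    rw [← map_smulₛₗ]
    exact hker _ _ (by rw [map_smul, hs, hs])
  · obtain ⟨m, rfl⟩ := hh v
    exact ⟨π m, hker _ _ (hs _)⟩
  · change b (h (s u)) (h (s v)) = _
    rw [hb, hs, hs]

/-- An anti-isometry of the nondegenerate submodule `N`, given on a cover `X` of `N`, and one of
the orthogonal complement of `N` combine to one of `V`. -/
theorem exists_isometry_of_orth [FiniteDimensional k V] (H : IsAdjointForm σ η b)
    {X : Type*} [AddCommGroup X] [Module R X] (N : Submodule R V)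
    (hN : ∀ u ∈ N, (∀ v ∈ N, b u v = 0) → u = 0)
    (π : X →ₗ[R] V) (h : X →ₛₗ[σ] V) (hπN : ∀ n ∈ N, ∃ x, π x = n)
    (hhN : ∀ n ∈ N, ∃ x, h x = n) (hhN' : ∀ x, h x ∈ N) (hπN' : ∀ x, π x ∈ N)
    (hb : ∀ x y, b (h x) (h y) = b (π y) (π x))
    (g : H.orth N →ₛₗ[σ] H.orth N) (hg : Function.Surjective g)
    (hgb : ∀ u v, b (g u) (g v) = b v u) :
    ∃ g : V →ₛₗ[σ] V, Function.Surjective g ∧ ∀ u v, b (g u) (g v) = b v u := by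
  have hsplit : ∀ v : V, ∃ n ∈ N, ∃ w : H.orth N, n + w = v := by
    intro v
    obtain ⟨y, hy, hyv⟩ := exists_mem_represents b (N.restrictScalars k) (N.restrictScalars k)
      hN (fun u hu h => hN u hu fun v hv => H.eq_zero_symm (h v hv)) (b.flip v)
    exact ⟨y, hy, ⟨v - y, fun n hn => by rw [map_sub, hyv n hn]; simp⟩, by simp⟩
  refine H.exists_isometry_of_cover (M := X × H.orth N)
    (π.comp (LinearMap.fst R X (H.orth N)) + (H.orth N).subtype.comp (LinearMap.snd R X _))
    (h.comp (LinearMap.fst R X (H.orth N)) +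
      (H.orth N).subtype.comp (g.comp (LinearMap.snd R X _))) ?_ ?_ ?_
  · intro v
    obtain ⟨n, hn, w, rfl⟩ := hsplit v
    obtain ⟨x, rfl⟩ := hπN n hn
    exact ⟨(x, w), rfl⟩
  · intro v
    obtain ⟨n, hn, w, rfl⟩ := hsplit v
    obtain ⟨x, rfl⟩ := hhN n hn
    obtain ⟨w, rfl⟩ := hg w
    exact ⟨(x, w), rfl⟩
  · rintro ⟨x, w⟩ ⟨x', w'⟩
    change b (h x + g w) (h x' + g w') = b (π x' + w') (π x + w)
    have h1 : ∀ n ∈ N, ∀ w : H.orth N, b n w = 0 := fun n hn w => w.2 n hn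
    have h2 : ∀ n ∈ N, ∀ w : H.orth N, b w n = 0 := fun n hn w => H.eq_zero_symm (h1 n hn w)
    simp only [map_add, LinearMap.add_apply, hb, hgb, h1 _ (hhN' _), h2 _ (hhN' _),
      h1 _ (hπN' _), h2 _ (hπN' _)]

theorem orth_restrict (H : IsAdjointForm σ η b) [FiniteDimensional k V] (N : Submodule R V)
    (hN : ∀ u ∈ N, (∀ v ∈ N, b u v = 0) → u = 0) :
    IsAdjointForm (V := H.orth N) σ η
      (b.compl₁₂ ((H.orth N).subtype.restrictScalars k) ((H.orth N).subtype.restrictScalars k)) where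
  sq := H.sq
  invol := H.invol
  symm u v := H.symm _ _
  adj r u v := H.adj _ _ _
  nondeg u hu := by
    apply Subtype.ext
    apply H.nondeg
    intro v
    obtain ⟨y, hy, hyv⟩ := exists_mem_represents b (N.restrictScalars k) (N.restrictScalars k)
      hN (fun u hu h => hN u hu fun v hv => H.eq_zero_symm (h v hv)) (b.flip v)
    have h1 : b u (v - y) = 0 :=
      hu ⟨v - y, fun n hn => by rw [map_sub, hyv n hn]; simp⟩
    have h2 : b u y = 0 := H.eq_zero_symm (u.2 y hy)
    rwa [map_sub, h2, sub_zero] at h1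


/-- Anti-isometries semilinear along `σ` exist, by induction on the dimension of `V`. -/
theorem exists_isometry {k R : Type} [Field k] [CommRing R] [Algebra k R] (h2 : (2 : k) ≠ 0)
    (hR : ∀ m : Ideal R, m.IsMaximal → m.IsPrincipal) {σ : R →+* R} {η : k} (n : ℕ) :
    ∀ {V : Type} [AddCommGroup V] [Module k V] [Module R V] [IsScalarTower k R V]
      [FiniteDimensional k V] {b : V →ₗ[k] V →ₗ[k] k} (_ : IsAdjointForm σ η b),
      Module.finrank k V = n →
      ∃ g : V →ₛₗ[σ] V, Function.Surjective g ∧ ∀ u v, b (g u) (g v) = b v u := by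
  induction n using Nat.strong_induction_on with
  | _ n ih =>
  intro V _ _ _ _ _ b H hn
  rcases subsingleton_or_nontrivial V with hV | hV
  · exact ⟨0, fun v => ⟨0, Subsingleton.elim _ _⟩, fun u v => by
      rw [Subsingleton.elim u 0, Subsingleton.elim v 0]; simp⟩
  have hW : ∀ N : Submodule R V, (∀ u ∈ N, (∀ v ∈ N, b u v = 0) → u = 0) →
      ∀ e ∈ N, e ≠ 0 → ∃ g : H.orth N →ₛₗ[σ] H.orth N, Function.Surjective g ∧
        ∀ u v, b (g u) (g v) = b v u := by
    intro N hN e he he0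
    have : FiniteDimensional k (H.orth N) :=
      inferInstanceAs (FiniteDimensional k ((H.orth N).restrictScalars k))
    refine ih _ ?_ (H.orth_restrict N hN) rfl
    rw [← hn]
    refine Submodule.finrank_lt (s := (H.orth N).restrictScalars k) fun htop => he0 ?_
    refine hN e he fun v _ => ?_
    have : v ∈ (H.orth N).restrictScalars k := by rw [htop]; trivial
    exact this e he
  rcases H.exists_perf h2 hR with ⟨e, he0, hp⟩ | ⟨e, f, he0, hp, hee, hff⟩
  · have hN : ∀ u ∈ Submodule.span R {e}, (∀ v ∈ Submodule.span R {e}, b u v = 0) → u = 0 := by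
      intro u hu h
      obtain ⟨r, rfl⟩ := Submodule.mem_span_singleton.1 hu
      exact hp.1 r fun s => h _ (Submodule.mem_span_singleton.2 ⟨s, rfl⟩)
    obtain ⟨g, hg, hgb⟩ := hW _ hN e (Submodule.mem_span_singleton_self e) he0
    refine H.exists_isometry_of_orth _ hN (LinearMap.toSpanSingleton R V e)
      ⟨⟨fun r => σ r • e, fun r s => by rw [map_add, add_smul]⟩,
        fun r s => by simp [mul_smul]⟩ ?_ ?_ ?_ ?_ ?_ g hg hgb
    · exact fun n hn => Submodule.mem_span_singleton.1 hn
    · intro n hn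
      obtain ⟨r, rfl⟩ := Submodule.mem_span_singleton.1 hn
      exact ⟨σ r, congrArg (· • e) (H.invol r)⟩
    · exact fun r => Submodule.mem_span_singleton.2 ⟨_, rfl⟩
    · exact fun r => Submodule.mem_span_singleton.2 ⟨_, rfl⟩
    · intro r s
      change b (σ r • e) (σ s • e) = b (s • e) (r • e)
      rw [← H.adj, smul_comm, H.adj, H.invol]
  · have hee' : ∀ r s : R, b (r • e) (s • e) = 0 := fun r s => by
      rw [H.adj', smul_smul, hee]
    have hff' : ∀ r s : R, b (r • f) (s • f) = 0 := fun r s => by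
      rw [H.adj', smul_smul, hff]
    have hN : ∀ u ∈ Submodule.span R {e, f},
        (∀ v ∈ Submodule.span R {e, f}, b u v = 0) → u = 0 := by
      intro u hu h
      obtain ⟨r, s, rfl⟩ := Submodule.mem_span_pair.1 hu
      have h1 : r • e = 0 := hp.1 r fun t => by
        have := h (t • f) (Submodule.mem_span_pair.2 ⟨0, t, by simp⟩)
        rwa [map_add, LinearMap.add_apply, hff', add_zero] at this
      have h2 : s • f = 0 := hp.2 s fun t => by
        have := h (t • e) (Submodule.mem_span_pair.2 ⟨t, 0, by simp⟩)
        rw [map_add, LinearMap.add_apply, hee', zero_add] at this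
        exact H.eq_zero_symm this
      rw [h1, h2, add_zero]
    obtain ⟨g, hg, hgb⟩ := hW _ hN e (Submodule.mem_span_pair.2 ⟨1, 0, by simp⟩) he0
    refine H.exists_isometry_of_orth _ hN (X := R × R)
      ((LinearMap.toSpanSingleton R V e).coprod (LinearMap.toSpanSingleton R V f))
      ⟨⟨fun r => σ r.2 • e + σ r.1 • f, fun r s => by
        simp only [Prod.fst_add, Prod.snd_add, map_add, add_smul]; abel⟩,
        fun r s => by simp [mul_smul]⟩ ?_ ?_ ?_ ?_ ?_ g hg hgb
    · intro n hn
      obtain ⟨r, s, rfl⟩ := Submodule.mem_span_pair.1 hn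
      exact ⟨(r, s), by simp⟩
    · intro n hn
      obtain ⟨r, s, rfl⟩ := Submodule.mem_span_pair.1 hn
      refine ⟨(σ s, σ r), ?_⟩
      change σ (σ r) • e + σ (σ s) • f = _
      rw [H.invol, H.invol]
    · exact fun r => Submodule.mem_span_pair.2 ⟨_, _, rfl⟩
    · exact fun r => Submodule.mem_span_pair.2 ⟨r.1, r.2, by simp⟩
    · rintro ⟨r, s⟩ ⟨r', s'⟩
      change b (σ s • e + σ r • f) (σ s' • e + σ r' • f) = _
      have hswap : ∀ (r s : R) (u v : V), b (σ r • u) (σ s • v) = b (s • u) (r • v) := by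
        intro r s u v
        rw [← H.adj, smul_comm, H.adj, H.invol]
      simp only [LinearMap.coprod_apply, LinearMap.toSpanSingleton_apply, map_add,
        LinearMap.add_apply, hee', hff', hswap]

end IsAdjointForm
end

/-! ### The ring `A[X]` and the trace form of `A` -/

theorem isPrincipalIdealRing_pi {ι : Type*} [Finite ι] {R : ι → Type*} [∀ i, CommRing (R i)]
    [∀ i, IsPrincipalIdealRing (R i)] : IsPrincipalIdealRing (∀ i, R i) where
  principal J := by
    classical
    cases nonempty_fintype ι
    have hs : ∀ i, Function.Surjective (Pi.evalRingHom R i) := fun i => Function.surjective_eval i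
    choose g hg using fun i => (IsPrincipalIdealRing.principal
      (J.map (Pi.evalRingHom R i))).principal
    have hmem : ∀ i, ∃ f ∈ J, f i = g i := fun i => by
      have : g i ∈ J.map (Pi.evalRingHom R i) := by
        rw [hg]; exact Ideal.mem_span_singleton_self _
      obtain ⟨f, hf, hfg⟩ := (Ideal.mem_map_iff_of_surjective _ (hs i)).1 this
      exact ⟨f, hf, hfg⟩
    choose F hFJ hF using hmem
    refine ⟨g, le_antisymm (fun f hf => ?_) ?_⟩
    · have : ∀ i, ∃ c, f i = g i * c := fun i => by
        have : f i ∈ J.map (Pi.evalRingHom R i) := Ideal.mem_map_of_mem (Pi.evalRingHom R i) hf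
        rw [hg] at this
        exact Ideal.mem_span_singleton.1 this
      choose c hc using this
      exact Ideal.mem_span_singleton.2 ⟨c, funext hc⟩
    · rw [Submodule.span_singleton_le_iff_mem]
      have : g = ∑ i, Pi.single i 1 * F i := by
        ext j
        rw [Finset.sum_apply, Finset.sum_eq_single j (fun i _ hi => by simp [hi.symm]) (by simp)]
        simp [hF]
      rw [this]
      exact J.sum_mem fun i _ => J.mul_mem_left _ (hFJ i)

/-- `A[X]` is a finite product of polynomial rings over the residue fields of `A`. -/
theorem isPrincipalIdealRing_polynomial (A : Type*) [CommRing A] [IsArtinianRing A]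
    [IsReduced A] : IsPrincipalIdealRing (Polynomial A) := by
  have : ∀ m : MaximalSpectrum A, IsPrincipalIdealRing (Polynomial (A ⧸ m.asIdeal)) := fun m => by
    let _ := Ideal.Quotient.field m.asIdeal
    infer_instance
  have := isPrincipalIdealRing_pi (R := fun m : MaximalSpectrum A => Polynomial (A ⧸ m.asIdeal))
  let e : Polynomial A ≃+* ∀ m : MaximalSpectrum A, Polynomial (A ⧸ m.asIdeal) :=
    (Polynomial.mapEquiv (IsArtinianRing.equivPi A).toRingEquiv).trans (Polynomial.piEquiv _)
  exact IsPrincipalIdealRing.of_surjective e.symm e.symm.surjective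

/-- The trace form of a commutative semisimple algebra in characteristic zero is nondegenerate:
the ideal `(c)` is generated by an idempotent, whose trace is its rank. -/
theorem eq_zero_of_trace_mul_eq_zero {k A : Type*} [Field k] [CharZero k] [CommRing A]
    [Algebra k A] [FiniteDimensional k A] [IsSemisimpleRing A] (c : A)
    (h : ∀ a, Algebra.trace k A (a * c) = 0) : c = 0 := by
  obtain ⟨e, he, hce⟩ := IsSemisimpleRing.ideal_eq_span_idempotent (Ideal.span {c})
  have h1 : e ∈ Ideal.span {c} := by rw [hce]; exact Ideal.mem_span_singleton_self e
  obtain ⟨a, rfl⟩ := Ideal.mem_span_singleton'.1 h1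
  have h2 : IsIdempotentElem (Algebra.lmul k A (a * c)) := he.map _
  have h3 := (LinearMap.IsIdempotentElem.trace_eq_zero_iff h2).1 (h a)
  have h4 : a * c = 0 := by simpa using LinearMap.congr_fun h3 1
  have h5 := Ideal.mem_span_singleton_self c
  rw [hce, h4] at h5
  simpa using h5

/-! ### The Hermitian module as a module over `A[X]` -/

/-- Lie algebra version of the MVW theorem: for every `x` in the Lie algebra
`u(E)` (an `A`-linear endomorphism of `E` with `⟨xu, v⟩ + ⟨u, xv⟩ = 0`), there is an
element `(g, -1)` of the MVW-extension `Ŭ(E)` (a `k`-linear automorphism `g` with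
`⟨gu, gv⟩ = ⟨v, u⟩`) such that `g x g⁻¹ = -x`. -/
theorem mvw_conjugation_lie_algebra {k A : Type} [Field k] [CharZero k]
    [CommRing A] [Algebra k A] [FiniteDimensional k A] [IsSemisimpleRing A]
    (τ : A ≃ₐ[k] A) (hτ : ∀ a, τ (τ a) = a)
    (ε : A) (hε : ε = 1 ∨ ε = -1)
    (E : Type) [AddCommGroup E] [Module A E] [Module.Finite A E]
    [Module k E] [IsScalarTower k A E]
    (B : E → E → A) (hherm : IsHermForm A τ ε E B)
    (x : Module.End A E) (hx : ∀ u v : E, B (x u) v + B u (x v) = 0) :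
    ∃ g : E ≃ₗ[k] E, (∀ u v : E, B (g u) (g v) = B v u) ∧
      ∀ v : E, g (x v) = -(x (g v)) := by
  obtain ⟨hB1, hB2, hB3, hB4, hB5⟩ := hherm
  obtain ⟨η, hη, hηε⟩ : ∃ η : k, η * η = 1 ∧ algebraMap k A η = ε := by
    rcases hε with rfl | rfl
    · exact ⟨1, by simp, by simp⟩
    · exact ⟨-1, by simp, by simp⟩
  have hB3' : ∀ (a : A) (u v : E), B u (a • v) = τ a * B u v := by
    intro a u v
    rw [hB4, hB3, map_mul, hB4 u v]
    ring
  have hk : ∀ (c : k) (u : E), c • u = algebraMap k A c • u := fun c u =>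
    (algebraMap_smul A c u).symm
  let b : E →ₗ[k] E →ₗ[k] k := LinearMap.mk₂ k (fun u v => Algebra.trace k A (B u v))
    (fun u u' v => by rw [hB1, map_add])
    (fun c u v => by rw [hk, hB3, ← Algebra.smul_def, map_smul])
    (fun u v v' => by rw [hB2, map_add])
    (fun c u v => by rw [hk, hB3', τ.commutes, ← Algebra.smul_def, map_smul])
  have hb : ∀ u v, b u v = Algebra.trace k A (B u v) := fun u v => rfl
  let σ : Polynomial A →+* Polynomial A :=
    Polynomial.eval₂RingHom (Polynomial.C.comp (τ : A →+* A)) (-Polynomial.X)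
  have hσC : ∀ a, σ (Polynomial.C a) = Polynomial.C (τ a) := fun a => by simp [σ]
  have hσX : σ Polynomial.X = -Polynomial.X := by simp [σ]
  let _ : Module (Polynomial A) E :=
    Module.compHom E (Polynomial.aeval x : Polynomial A →ₐ[A] Module.End A E).toRingHom
  have hsmul : ∀ (p : Polynomial A) (v : E), p • v = Polynomial.aeval x p v := fun p v => rfl
  have hC : ∀ (a : A) (v : E), Polynomial.C a • v = a • v := fun a v => by
    rw [hsmul, Polynomial.aeval_C]; rfl
  have hX : ∀ v : E, (Polynomial.X : Polynomial A) • v = x v := fun v => by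
    rw [hsmul, Polynomial.aeval_X]
  have hkC : ∀ (c : k) (v : E), c • v = Polynomial.C (algebraMap k A c) • v := fun c v => by
    rw [hC, hk]
  have : IsScalarTower k (Polynomial A) E := ⟨fun c p v => by
    rw [hkC c (p • v), ← mul_smul, Algebra.smul_def]; rfl⟩
  have : FiniteDimensional k E := Module.Finite.trans A E
  have H : IsAdjointForm σ η b :=
    { sq := hη
      invol := fun r => by
        have : σ.comp σ = RingHom.id _ := by
          apply Polynomial.ringHom_ext
          · intro a; simp [hσC, hτ]
          · simp [hσX]
        exact RingHom.congr_fun this r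
      symm := fun u v => by
        rw [hb, hb, hB4, ← hηε, ← Algebra.smul_def, map_smul, smul_eq_mul,
          Algebra.trace_eq_of_algEquiv τ]
      adj := fun r => by
        induction r using Polynomial.induction_on with
        | C a =>
          intro u v
          rw [hσC, hC, hC, hb, hb, hB3, hB3', hτ]
        | add p q hp hq =>
          intro u v
          rw [add_smul, map_add, LinearMap.add_apply, hp, hq, map_add, add_smul, map_add]
        | monomial n a ih =>
          intro u v
          rw [pow_succ, ← mul_assoc, mul_smul, ih, hX, map_mul _ _ Polynomial.X, hσX,
            mul_comm _ (-Polynomial.X),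
            mul_smul, neg_smul, hX, map_neg, hb, hb, eq_neg_of_add_eq_zero_left (hx _ _), map_neg]
      nondeg := fun u hu => hB5 u fun v => eq_zero_of_trace_mul_eq_zero (k := k) _ fun a => by
        have := hu (τ a • v)
        rwa [hb, hB3', hτ] at this }
  have hPIR := isPrincipalIdealRing_polynomial A
  obtain ⟨g, hg, hgb⟩ := IsAdjointForm.exists_isometry two_ne_zero
    (fun m _ => hPIR.principal m) _ H rfl
  have hgA : ∀ (a : A) (v : E), g (a • v) = τ a • g v := fun a v => by
    rw [← hC, map_smulₛₗ, hσC, hC]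
  let g' : E →ₗ[k] E :=
    { toFun := g
      map_add' := map_add g
      map_smul' := fun c v => by rw [hk, hgA, τ.commutes, ← hk]; rfl }
  refine ⟨LinearEquiv.ofBijective g' ⟨LinearMap.injective_iff_surjective.2 hg, hg⟩, ?_, ?_⟩
  · intro u v
    change B (g u) (g v) = B v u
    -- The trace identity for `a * B (g u) (g v)` is the one for `b` at `τ a • u` and `v`.
    rw [← sub_eq_zero]
    refine eq_zero_of_trace_mul_eq_zero (k := k) _ fun a => ?_
    have h1 := hgb (τ a • u) v
    rw [hgA, hτ, hb, hb, hB3, hB3', hτ] at h1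
    rw [mul_sub, map_sub, h1, sub_self]
  · intro v
    change g (x v) = -(x (g v))
    rw [← hX, map_smulₛₗ, hσX, neg_smul, hX]
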